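/- Let s ∈ (0,1) and let z ∈ ℂ with Re z > 0. Then −(s/Γ(1−s)) ∫₀^∞ τ^{−1−s} (e^{−τz} − 1) dτ = z^s, where z^s = exp(s Log z) is the principal branch of the complex power and Γ is the Gamma function. In particular the integrand τ ↦ τ^{−1−s}(e^{−τz} − 1) is integrable on (0,∞). -/

import Mathlib

/-!
Write `G z = ∫₀^∞ τ^{-1-s} (e^{-τz} - 1) dτ` on the half plane `Re z > 0`. Since
`‖e^{-τz} - 1‖ ≤ 2 min(1, τ‖z‖)`, the integral converges absolutely
(`integrableOn_balakrishnan`). Differentiating under the integral sign gives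
`G' z = -F z`, where `F z = ∫₀^∞ τ^{-s} e^{-τz} dτ` (`hasDerivAt_balakrishnan`), and integrating by
parts gives `G z = -(z / s) F z` (`balakrishnan_eq_laplace`). Hence `z G' z = s G z`, so that
`z^{-s} G z` has zero derivative and is constant on the half plane. Its value at `z = 1` is
`-F 1 / s = -Γ(1 - s) / s`, which is the asserted identity.
-/

open MeasureTheory Set Filter Topology Asymptotics

lemma norm_exp_neg_mul_sub_one_le_two {z : ℂ} (hz : 0 < z.re) {τ : ℝ} (hτ : 0 < τ) :
    ‖Complex.exp (-(τ : ℂ) * z) - 1‖ ≤ 2 := by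
  have h : ‖Complex.exp (-(τ : ℂ) * z)‖ ≤ 1 := by
    rw [Complex.norm_exp, Real.exp_le_one_iff]
    simp only [neg_mul, Complex.neg_re, Complex.re_ofReal_mul]
    have := mul_pos hτ hz
    linarith
  calc _ ≤ ‖Complex.exp (-(τ : ℂ) * z)‖ + ‖(1 : ℂ)‖ := norm_sub_le _ _
    _ ≤ 2 := by rw [norm_one]; linarith

lemma norm_exp_neg_mul_sub_one_le_mul {z : ℂ} (hz : 0 < z.re) {τ : ℝ} (hτ : 0 < τ) :
    ‖Complex.exp (-(τ : ℂ) * z) - 1‖ ≤ 2 * ‖z‖ * τ := by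
  have hn : ‖-(τ : ℂ) * z‖ = τ * ‖z‖ := by
    rw [norm_mul, norm_neg, Complex.norm_real, Real.norm_of_nonneg hτ.le]
  rcases le_or_gt ‖-(τ : ℂ) * z‖ 1 with h | h
  · have := Complex.norm_exp_sub_one_le h
    rw [hn] at this
    linarith
  · have := norm_exp_neg_mul_sub_one_le_two hz hτ
    rw [hn] at h
    linarith

lemma integrableOn_balakrishnan {s : ℝ} (hs : s ∈ Ioo (0 : ℝ) 1) {z : ℂ} (hz : 0 < z.re) :
    IntegrableOn
      (fun τ : ℝ => (τ ^ (-1 - s)) • (Complex.exp (-(τ : ℂ) * z) - 1)) (Ioi 0) := by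
  have hmeas : Measurable
      (fun τ : ℝ => (τ ^ (-1 - s)) • (Complex.exp (-(τ : ℂ) * z) - 1)) := by
    fun_prop
  rw [← Ioc_union_Ioi_eq_Ioi (zero_le_one (α := ℝ))]
  refine IntegrableOn.union ?_ ?_
  · have hb : IntegrableOn (fun τ : ℝ => 2 * ‖z‖ * τ ^ (-s)) (Ioc 0 1) := by
      rw [← intervalIntegrable_iff_integrableOn_Ioc_of_le zero_le_one]
      exact (intervalIntegral.intervalIntegrable_rpow' (by linarith [hs.2])).const_mul _
    refine Integrable.mono' hb hmeas.aestronglyMeasurable ?_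
    refine (ae_restrict_mem measurableSet_Ioc).mono fun τ hτ => ?_
    have hτ0 : 0 < τ := hτ.1
    rw [norm_smul, Real.norm_of_nonneg (by positivity)]
    calc _ ≤ τ ^ (-1 - s) * (2 * ‖z‖ * τ) := by
          gcongr
          exact norm_exp_neg_mul_sub_one_le_mul hz hτ0
      _ = 2 * ‖z‖ * (τ ^ (-1 - s) * τ ^ (1 : ℝ)) := by rw [Real.rpow_one]; ring
      _ = 2 * ‖z‖ * τ ^ (-s) := by rw [← Real.rpow_add hτ0]; ring_nf
  · have hb : IntegrableOn (fun τ : ℝ => τ ^ (-1 - s) * 2) (Ioi 1) :=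
      (integrableOn_Ioi_rpow_of_lt (by linarith [hs.1]) one_pos).mul_const _
    refine Integrable.mono' hb hmeas.aestronglyMeasurable ?_
    refine (ae_restrict_mem measurableSet_Ioi).mono fun τ hτ => ?_
    have hτ0 : 0 < τ := one_pos.trans hτ
    rw [norm_smul, Real.norm_of_nonneg (by positivity)]
    gcongr
    exact norm_exp_neg_mul_sub_one_le_two hz hτ0

/-- The derivative in `z` of the integrand is dominated, uniformly on `Re w > Re z / 2`, by
`τ^{-s} e^{-τ Re z / 2}`, so that one may differentiate under the integral sign. -/
lemma hasDerivAt_balakrishnan {s : ℝ} (hs : s ∈ Ioo (0 : ℝ) 1) {z : ℂ} (hz : 0 < z.re) :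
    IntegrableOn (fun τ : ℝ => -((τ ^ (-s)) • Complex.exp (-(τ : ℂ) * z))) (Ioi 0) ∧
    HasDerivAt
      (fun w : ℂ => ∫ τ : ℝ in Ioi (0 : ℝ), (τ ^ (-1 - s)) • (Complex.exp (-(τ : ℂ) * w) - 1))
      (∫ τ : ℝ in Ioi (0 : ℝ), -((τ ^ (-s)) • Complex.exp (-(τ : ℂ) * z))) z := by
  have hopen : IsOpen {w : ℂ | z.re / 2 < w.re} := isOpen_lt continuous_const Complex.continuous_re
  have hb : IntegrableOn (fun τ : ℝ => τ ^ (-s) * Real.exp (-(z.re / 2) * τ ^ (1 : ℝ))) (Ioi 0) :=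
    integrableOn_rpow_mul_exp_neg_mul_rpow (by linarith [hs.2]) one_pos (by linarith)
  refine hasDerivAt_integral_of_dominated_loc_of_deriv_le
    (F := fun (w : ℂ) (τ : ℝ) => (τ ^ (-1 - s)) • (Complex.exp (-(τ : ℂ) * w) - 1))
    (F' := fun (w : ℂ) (τ : ℝ) => -((τ ^ (-s)) • Complex.exp (-(τ : ℂ) * w)))
    (hopen.mem_nhds (show z.re / 2 < z.re by linarith)) ?_
    (integrableOn_balakrishnan hs hz) ?_ ?_ hb ?_
  · refine Eventually.of_forall fun w => Measurable.aestronglyMeasurable ?_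
    fun_prop
  · refine Measurable.aestronglyMeasurable ?_
    fun_prop
  · refine (ae_restrict_mem measurableSet_Ioi).mono fun τ hτ w hw => ?_
    have hτ0 : 0 < τ := hτ
    have hw' : z.re / 2 < w.re := hw
    rw [norm_neg, norm_smul, Real.norm_of_nonneg (by positivity), Complex.norm_exp, Real.rpow_one]
    gcongr
    simp only [neg_mul, Complex.neg_re, Complex.re_ofReal_mul]
    nlinarith
  · refine (ae_restrict_mem measurableSet_Ioi).mono fun τ hτ w hw => ?_
    have hτ0 : 0 < τ := hτ
    have h1 : HasDerivAt (fun w : ℂ => -(τ : ℂ) * w) (-(τ : ℂ)) w := by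
      simpa using (hasDerivAt_id w).const_mul (-(τ : ℂ))
    convert! ((h1.cexp.sub_const 1).const_smul (τ ^ (-1 - s))) using 1
    have : τ ^ (-s) = τ ^ (-1 - s) * τ := by
      rw [← Real.rpow_add_one hτ0.ne']
      ring_nf
    rw [this]
    simp only [Complex.real_smul]
    push_cast
    ring

/-- Integration by parts, with the primitive `-τ^{-s} / s` of `τ^{-1-s}`. The boundary terms are
`O(τ^{1-s})` at `0` and `O(τ^{-s})` at infinity, so both vanish. -/
lemma balakrishnan_eq_laplace {s : ℝ} (hs : s ∈ Ioo (0 : ℝ) 1) {z : ℂ} (hz : 0 < z.re) :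
    (s : ℂ) * ∫ τ : ℝ in Ioi (0 : ℝ), (τ ^ (-1 - s)) • (Complex.exp (-(τ : ℂ) * z) - 1)
      = z * ∫ τ : ℝ in Ioi (0 : ℝ), -((τ ^ (-s)) • Complex.exp (-(τ : ℂ) * z)) := by
  have hI := integrableOn_balakrishnan hs hz
  have hJ := (hasDerivAt_balakrishnan hs hz).1
  have hu : ∀ τ ∈ Ioi (0 : ℝ), HasDerivAt (fun τ : ℝ => ((τ ^ (-s) : ℝ) : ℂ))
      ((-s * τ ^ (-s - 1) : ℝ) : ℂ) τ := fun τ hτ =>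
    (Real.hasDerivAt_rpow_const (Or.inl (ne_of_gt hτ))).ofReal_comp
  have hv : ∀ τ ∈ Ioi (0 : ℝ), HasDerivAt (fun τ : ℝ => Complex.exp (-(τ : ℂ) * z) - 1)
      (Complex.exp (-(τ : ℂ) * z) * (-z)) τ := fun τ _ => by
    have h1 : HasDerivAt (fun τ : ℝ => -(τ : ℂ) * z) (-z) τ := by
      simpa using ((Complex.ofRealCLM.hasDerivAt (x := τ)).neg.mul_const z)
    exact h1.cexp.sub_const 1
  have e1 : ∀ τ : ℝ, ((τ ^ (-s) : ℝ) : ℂ) * (Complex.exp (-(τ : ℂ) * z) * (-z))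
      = z * -((τ ^ (-s)) • Complex.exp (-(τ : ℂ) * z)) := fun τ => by
    rw [Complex.real_smul]; ring
  have e2 : ∀ τ : ℝ, ((-s * τ ^ (-s - 1) : ℝ) : ℂ) * (Complex.exp (-(τ : ℂ) * z) - 1)
      = -(s : ℂ) * ((τ ^ (-1 - s)) • (Complex.exp (-(τ : ℂ) * z) - 1)) := fun τ => by
    rw [Complex.real_smul, show -s - 1 = -1 - s by ring]; push_cast; ring
  have key := integral_Ioi_mul_deriv_eq_deriv_mul (a' := 0) (b' := 0) hu hv
    (by
      refine IntegrableOn.congr_fun (hJ.const_mul z) (fun τ _ => (e1 τ).symm) measurableSet_Ioi)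
    (by
      refine IntegrableOn.congr_fun (hI.const_mul (-(s : ℂ))) (fun τ _ => (e2 τ).symm)
        measurableSet_Ioi)
    (by
      have h0 : Tendsto (fun τ : ℝ => 2 * ‖z‖ * τ ^ (1 - s)) (𝓝[>] 0) (𝓝 0) := by
        have : ContinuousAt (fun τ : ℝ => 2 * ‖z‖ * τ ^ (1 - s)) 0 :=
          (Real.continuousAt_rpow_const _ _ (Or.inr (by linarith [hs.2]))).const_mul _
        have h := this.tendsto
        rw [Real.zero_rpow (by linarith [hs.2]), mul_zero] at h
        exact h.mono_left nhdsWithin_le_nhds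
      refine squeeze_zero_norm' ?_ h0
      filter_upwards [self_mem_nhdsWithin] with τ hτ
      have hτ0 : 0 < τ := hτ
      rw [Pi.mul_apply, norm_mul, Complex.norm_real, Real.norm_of_nonneg (by positivity)]
      calc _ ≤ τ ^ (-s) * (2 * ‖z‖ * τ) := by
            gcongr
            exact norm_exp_neg_mul_sub_one_le_mul hz hτ0
        _ = 2 * ‖z‖ * (τ ^ (-s) * τ) := by ring
        _ = 2 * ‖z‖ * τ ^ (1 - s) := by rw [← Real.rpow_add_one hτ0.ne']; ring_nf)
    (by
      have h0 : Tendsto (fun τ : ℝ => τ ^ (-s) * 2) atTop (𝓝 0) := by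
        simpa using (tendsto_rpow_neg_atTop hs.1).mul_const 2
      refine squeeze_zero_norm' ?_ h0
      filter_upwards [eventually_gt_atTop 0] with τ hτ0
      rw [Pi.mul_apply, norm_mul, Complex.norm_real, Real.norm_of_nonneg (by positivity)]
      gcongr
      exact norm_exp_neg_mul_sub_one_le_two hz hτ0)
  simp only [e1, e2] at key
  rw [integral_const_mul, integral_const_mul] at key
  rw [key]
  ring

/-- The equation `z G' z = s G z` gives `(z^{-s} G z)' = 0` on the half plane, which is connected;
hence `G z = z^s G 1`. -/
lemma balakrishnan_eq_cpow_mul {s : ℝ} (hs : s ∈ Ioo (0 : ℝ) 1) {z : ℂ} (hz : 0 < z.re) :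
    ∫ τ : ℝ in Ioi (0 : ℝ), (τ ^ (-1 - s)) • (Complex.exp (-(τ : ℂ) * z) - 1)
      = z ^ (s : ℂ) *
        ∫ τ : ℝ in Ioi (0 : ℝ), (τ ^ (-1 - s)) • (Complex.exp (-(τ : ℂ) * 1) - 1) := by
  set G : ℂ → ℂ := fun w : ℂ =>
    ∫ τ : ℝ in Ioi (0 : ℝ), (τ ^ (-1 - s)) • (Complex.exp (-(τ : ℂ) * w) - 1) with hG
  have hopen : IsOpen {w : ℂ | 0 < w.re} := isOpen_lt continuous_const Complex.continuous_re
  have hder : ∀ w : ℂ, 0 < w.re → HasDerivAt (fun w => w ^ (-(s : ℂ)) * G w) 0 w := by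
    intro w hw
    have hw0 : w ≠ 0 := by rintro rfl; simp at hw
    have h1 : HasDerivAt (fun w : ℂ => w ^ (-(s : ℂ))) (-(s : ℂ) * w ^ (-(s : ℂ) - 1)) w := by
      simpa using (hasDerivAt_id w).cpow_const (c := -(s : ℂ)) (Or.inl hw)
    convert! h1.mul (hasDerivAt_balakrishnan hs hw).2 using 1
    have h2 := balakrishnan_eq_laplace hs hw
    have h3 : w ^ (-(s : ℂ)) = w ^ (-(s : ℂ) - 1) * w := by
      rw [Complex.cpow_sub _ _ hw0, Complex.cpow_one, div_mul_cancel₀ _ hw0]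
    rw [h3]
    linear_combination w ^ (-(s : ℂ) - 1) * h2
  have hconst := hopen.is_const_of_deriv_eq_zero (f := fun w => w ^ (-(s : ℂ)) * G w)
    (convex_halfSpace_re_gt 0).isPreconnected
    (fun w hw => (hder w hw).differentiableAt.differentiableWithinAt)
    (fun w hw => (hder w hw).deriv) (show z ∈ {w : ℂ | 0 < w.re} from hz)
    (show (1 : ℂ) ∈ {w : ℂ | 0 < w.re} by simp)
  have hz0 : z ≠ 0 := by rintro rfl; simp at hz
  simp only [Complex.one_cpow, one_mul] at hconst
  change G z = z ^ (s : ℂ) * G 1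
  rw [← hconst, ← mul_assoc, ← Complex.cpow_add _ _ hz0, add_neg_cancel, Complex.cpow_zero, one_mul]

lemma laplace_one {s : ℝ} (hs : s ∈ Ioo (0 : ℝ) 1) :
    ∫ τ : ℝ in Ioi (0 : ℝ), -((τ ^ (-s)) • Complex.exp (-(τ : ℂ) * 1))
      = -(Real.Gamma (1 - s) : ℂ) := by
  rw [integral_neg, Real.Gamma_eq_integral (by linarith [hs.2]), ← integral_complex_ofReal]
  congr 1
  refine setIntegral_congr_fun measurableSet_Ioi fun τ _ => ?_
  simp only [Complex.real_smul, mul_one]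
  rw [show 1 - s - 1 = -s by ring]
  push_cast
  ring


/-- the scalar Balakrishnan identity
`-(s/Γ(1-s)) ∫₀^∞ τ^{-1-s} (e^{-τz} - 1) dτ = z^s` for `0 < s < 1` and `Re z > 0`,
where `z^s` is the principal branch; in particular the integrand is integrable. -/
theorem balakrishnan_identity (s : ℝ) (hs : s ∈ Set.Ioo (0 : ℝ) 1)
    (z : ℂ) (hz : 0 < z.re) :
    MeasureTheory.IntegrableOn
      (fun τ : ℝ => (τ ^ (-1 - s)) • (Complex.exp (-(τ : ℂ) * z) - 1)) (Set.Ioi 0) ∧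
    -((s : ℂ) / (Real.Gamma (1 - s) : ℂ)) *
        ∫ τ : ℝ in Set.Ioi (0 : ℝ), (τ ^ (-1 - s)) • (Complex.exp (-(τ : ℂ) * z) - 1)
      = z ^ (s : ℂ) := by
  refine ⟨integrableOn_balakrishnan hs hz, ?_⟩
  have hΓ : (Real.Gamma (1 - s) : ℂ) ≠ 0 :=
    Complex.ofReal_ne_zero.2 (Real.Gamma_pos_of_pos (by linarith [hs.2])).ne'
  have h1 := balakrishnan_eq_laplace hs (z := 1) (by simp)
  rw [laplace_one hs, one_mul] at h1
  rw [balakrishnan_eq_cpow_mul hs hz]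
  generalize ∫ τ : ℝ in Ioi (0 : ℝ), (τ ^ (-1 - s)) • (Complex.exp (-(τ : ℂ) * 1) - 1) = G₁ at h1 ⊢
  field_simp
  linear_combination -z ^ (s : ℂ) * h1
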